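/- Let (Ω, ℱ, P) be a probability space with filtration (ℱ_t)_{t∈ℕ}, let (x_t), (w_t), (η_t) be sequences of real-valued random variables with x_t, η_t, w_{t-1} being ℱ_{t-1}-measurable, let c ∈ ℝ, and suppose x_{t+1} = (1 - η_t) x_t + η_t (c + w_t) for all t. Assume: (1) there exist finite constants A, B with E[w_t² | ℱ_{t-1}] ≤ A |x_t|² + B almost surely; (2) E[w_t | ℱ_{t-1}] = 0 almost surely; (3) η_t ∈ [0,1]; (4) ∑_{t=0}^∞ η_t = ∞ almost surely; (5) ∑_{t=0}^∞ η_t² < ∞ almost surely. Then x_t converges to c almost surely. -/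

import Mathlib

open MeasureTheory Filter Topology

/-!
The squared error `V = (x - c)²` is an almost supermartingale in the sense of Robbins and Siegmund:
expanding the recursion and using that the noise is conditionally centred,
`E[V_{t+1} | ℱ_t] ≤ (1 + C η_t²) V_t + D η_t² - 2 η_t V_t`.
Since `∑ η_t² < ∞`, the Robbins–Siegmund theorem yields both that `V_t` converges and that
`∑ η_t V_t < ∞`; as `∑ η_t = ∞`, the limit of `V_t` must be `0`.

The Robbins–Siegmund theorem itself is reduced to the convergence of supermartingales that are
bounded below: multiplying by a predictable discount factor absorbs `C η_t²`, and switching this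
factor to `0` once `∑ D η_t²` exceeds a level `K` makes the remaining drift uniformly bounded.
The initial value may have no second moment, so the argument is run on the events where the initial
error is at most `k`, for each `k`.
-/

section RealSequences

lemma summable_of_summable_mul_of_tendsto_ne_zero {f g : ℕ → ℝ} {L : ℝ}
    (hgf : Summable fun n => g n * f n) (hg : Tendsto g atTop (𝓝 L)) (hL : L ≠ 0) :
    Summable f := by
  have hinv : (fun n => (g n)⁻¹) =O[atTop] fun _ => (1 : ℝ) := (hg.inv₀ hL).isBigO_one ℝ
  have hbound : (fun n => (g n)⁻¹ * (g n * f n)) =O[atTop] fun n => g n * f n := by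
    simpa only [one_mul] using hinv.mul (Asymptotics.isBigO_refl (fun n => g n * f n) atTop)
  refine summable_of_isBigO_nat hgf (hbound.congr' ?_ EventuallyEq.rfl)
  filter_upwards [hg.eventually_ne hL] with n hn using inv_mul_cancel_left₀ hn (f n)

lemma tendsto_zero_of_sq_tendsto_zero {ι : Type*} {l : Filter ι} {f : ι → ℝ}
    (hf : Tendsto (fun i => f i ^ 2) l (𝓝 0)) : Tendsto f l (𝓝 0) := by
  rw [tendsto_zero_iff_abs_tendsto_zero]
  simpa only [Function.comp_def, Real.sqrt_sq_eq_abs, Real.sqrt_zero] using hf.sqrt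

/-- The factor `exp (-∑_{s<t} a s)`, which compensates multiplicative growth by `1 + a s` at each
step `s`, switched to `0` from the first time on at which `∑_{s<t} b s` exceeds `K`. -/
noncomputable def discountFactor (K : ℝ) (a b : ℕ → ℝ) (t : ℕ) : ℝ :=
  if ∑ s ∈ Finset.range t, b s ≤ K then Real.exp (-∑ s ∈ Finset.range t, a s) else 0

variable {K : ℝ} {a b : ℕ → ℝ}

lemma discountFactor_nonneg (t : ℕ) : 0 ≤ discountFactor K a b t := by
  unfold discountFactor
  split_ifs <;> positivity

lemma discountFactor_mem_Icc (ha : ∀ t, 0 ≤ a t) (t : ℕ) :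
    discountFactor K a b t ∈ Set.Icc (0 : ℝ) 1 := by
  refine ⟨discountFactor_nonneg t, ?_⟩
  unfold discountFactor
  split_ifs
  · exact Real.exp_le_one_iff.2 (neg_nonpos.2 (Finset.sum_nonneg fun s _ => ha s))
  · exact zero_le_one

lemma discountFactor_succ_mul_le (hb : ∀ t, 0 ≤ b t) (t : ℕ) :
    discountFactor K a b (t + 1) * (1 + a t) ≤ discountFactor K a b t := by
  by_cases hK : ∑ s ∈ Finset.range (t + 1), b s ≤ K
  · have hK' : ∑ s ∈ Finset.range t, b s ≤ K := by
      rw [Finset.sum_range_succ] at hK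
      linarith [hb t]
    rw [discountFactor, discountFactor, if_pos hK, if_pos hK', Finset.sum_range_succ]
    calc Real.exp (-(∑ s ∈ Finset.range t, a s + a t)) * (1 + a t)
        ≤ Real.exp (-(∑ s ∈ Finset.range t, a s + a t)) * Real.exp (a t) := by
          gcongr
          linarith [Real.add_one_le_exp (a t)]
      _ = Real.exp (-∑ s ∈ Finset.range t, a s) := by
          rw [← Real.exp_add]
          ring_nf
  · rw [discountFactor, if_neg hK, zero_mul]
    exact discountFactor_nonneg t

lemma sum_discountFactor_succ_mul_le (hK : 0 ≤ K) (ha : ∀ t, 0 ≤ a t) (hb : ∀ t, 0 ≤ b t) (t : ℕ) :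
    ∑ s ∈ Finset.range t, discountFactor K a b (s + 1) * b s ≤ K := by
  induction t with
  | zero => simpa using hK
  | succ t ih =>
    by_cases hsum : ∑ s ∈ Finset.range (t + 1), b s ≤ K
    · exact (Finset.sum_le_sum fun s _ =>
        mul_le_of_le_one_left (hb s) (discountFactor_mem_Icc ha (s + 1)).2).trans hsum
    · rwa [Finset.sum_range_succ, discountFactor, if_neg hsum, zero_mul, add_zero]

lemma tendsto_discountFactor (ha : Summable a) (hK : ∀ t, ∑ s ∈ Finset.range t, b s ≤ K) :
    Tendsto (discountFactor K a b) atTop (𝓝 (Real.exp (-∑' t, a t))) := by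
  have hexp : discountFactor K a b = fun t => Real.exp (-∑ s ∈ Finset.range t, a s) :=
    funext fun t => if_pos (hK t)
  rw [hexp]
  exact ha.tendsto_sum_tsum_nat.neg.rexp

end RealSequences

section Probability

variable {Ω : Type*} {m₀ : MeasurableSpace Ω} {μ : Measure Ω} {ℱ : Filtration ℕ m₀}

lemma isStronglyPredictable_discountFactor {α β : ℕ → Ω → ℝ} (K : ℝ)
    (hα : StronglyAdapted ℱ α) (hβ : StronglyAdapted ℱ β) :
    IsStronglyPredictable ℱ fun t ω => discountFactor K (α · ω) (β · ω) t := by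
  have hsum {f : ℕ → Ω → ℝ} (hf : StronglyAdapted ℱ f) (t : ℕ) :
      StronglyMeasurable[ℱ t] fun ω => ∑ s ∈ Finset.range (t + 1), f s ω :=
    Finset.stronglyMeasurable_fun_sum _ fun s hs =>
      (hf s).mono (ℱ.mono (Finset.mem_range_succ_iff.1 hs))
  refine .of_measurable_add_one (stronglyMeasurable_const' fun _ _ => rfl) fun t => ?_
  exact StronglyMeasurable.ite ((hsum hβ t).measurableSet_le stronglyMeasurable_const)
    (Real.continuous_exp.comp_stronglyMeasurable (hsum hα t).neg) stronglyMeasurable_const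

lemma memLp_top_of_mem_Icc {f : Ω → ℝ} {a b : ℝ} (hf : AEStronglyMeasurable f μ)
    (hfab : ∀ ω, f ω ∈ Set.Icc a b) : MemLp f ⊤ μ :=
  memLp_top_of_bound hf (max |a| |b|) <|
    .of_forall fun ω => abs_le_max_abs_abs (hfab ω).1 (hfab ω).2

lemma integrable_mul_of_mem_Icc {f g : Ω → ℝ} {a b : ℝ} (hf : Integrable f μ)
    (hg : AEStronglyMeasurable g μ) (hgab : ∀ ω, g ω ∈ Set.Icc a b) : Integrable (g * f) μ :=
  hf.mul_of_top_right (memLp_top_of_mem_Icc hg hgab)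

lemma ae_exists_tendsto_of_supermartingale_of_le [IsFiniteMeasure μ] {U : ℕ → Ω → ℝ} {c : ℝ}
    (hU : Supermartingale U ℱ μ) (hc : ∀ t ω, c ≤ U t ω) :
    ∀ᵐ ω ∂μ, ∃ l, Tendsto (fun t => U t ω) atTop (𝓝 l) := by
  have hint : ∀ t, Integrable (fun ω => U t ω + 2 * |c|) μ := fun t =>
    (hU.integrable t).add (integrable_const _)
  have hnorm : ∀ t, ∫ ω, ‖U t ω‖ ∂μ ≤ ∫ ω, (U 0 ω + 2 * |c|) ∂μ := fun t =>
    calc ∫ ω, ‖U t ω‖ ∂μ ≤ ∫ ω, (U t ω + 2 * |c|) ∂μ := by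
          refine integral_mono (hU.integrable t).norm (hint t) fun ω => abs_le.2 ⟨?_, ?_⟩ <;>
            linarith [hc t ω, neg_abs_le c, abs_nonneg c]
      _ ≤ ∫ ω, (U 0 ω + 2 * |c|) ∂μ := by
          rw [integral_add (hU.integrable t) (integrable_const _),
            integral_add (hU.integrable 0) (integrable_const _)]
          gcongr 1
          simpa only [setIntegral_univ] using hU.setIntegral_le t.zero_le MeasurableSet.univ
  have hbdd : ∀ t, eLpNorm ((-U) t) 1 μ ≤ (∫ ω, (U 0 ω + 2 * |c|) ∂μ).toNNReal := fun t => by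
    rw [Pi.neg_apply, eLpNorm_neg, eLpNorm_one_eq_lintegral_enorm,
      ← ofReal_integral_norm_eq_lintegral_enorm (hU.integrable t)]
    exact ENNReal.ofReal_le_ofReal (hnorm t)
  filter_upwards [hU.neg.exists_ae_tendsto_of_bdd hbdd] with ω ⟨l, hl⟩
  exact ⟨-l, by simpa only [Pi.neg_apply, neg_neg] using hl.neg⟩

/-- Almost supermartingales of Robbins and Siegmund: nonnegative processes `V` which fail to be
supermartingales only through a growth rate `α` and a drift `β`, and which lose at least `γ` at
each step. -/
structure IsAlmostSupermartingale (ℱ : Filtration ℕ m₀) (μ : Measure Ω) (V α β γ : ℕ → Ω → ℝ) :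
    Prop where
  stronglyAdapted : StronglyAdapted ℱ V
  integrable : ∀ t, Integrable (V t) μ
  nonneg : ∀ t ω, 0 ≤ V t ω
  stronglyAdapted_growth : StronglyAdapted ℱ α
  growth_nonneg : ∀ t ω, 0 ≤ α t ω
  stronglyAdapted_drift : StronglyAdapted ℱ β
  drift_nonneg : ∀ t ω, 0 ≤ β t ω
  stronglyAdapted_loss : StronglyAdapted ℱ γ
  loss_nonneg : ∀ t ω, 0 ≤ γ t ω
  condExp_le : ∀ t, ∀ᵐ ω ∂μ, (μ[V (t + 1) | ℱ t]) ω ≤ (1 + α t ω) * V t ω + β t ω - γ t ω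

namespace IsAlmostSupermartingale

variable {V α β γ ρ : ℕ → Ω → ℝ}

lemma predictable_mul (h : IsAlmostSupermartingale ℱ μ V α β γ) (hρ : IsStronglyPredictable ℱ ρ)
    (hρ_mem_Icc : ∀ t ω, ρ t ω ∈ Set.Icc (0 : ℝ) 1)
    (hρ_succ : ∀ t ω, ρ (t + 1) ω * (1 + α t ω) ≤ ρ t ω) :
    IsAlmostSupermartingale ℱ μ (fun t ω => ρ t ω * V t ω) 0
      (fun t ω => ρ (t + 1) ω * β t ω) (fun t ω => ρ (t + 1) ω * γ t ω) where
  stronglyAdapted t := (hρ.stronglyAdapted t).mul (h.stronglyAdapted t)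
  integrable t := integrable_mul_of_mem_Icc (h.integrable t)
    ((hρ.stronglyAdapted t).mono (ℱ.le t)).aestronglyMeasurable (hρ_mem_Icc t)
  nonneg t ω := mul_nonneg (hρ_mem_Icc t ω).1 (h.nonneg t ω)
  stronglyAdapted_growth _ := stronglyMeasurable_zero
  growth_nonneg _ _ := le_rfl
  stronglyAdapted_drift t := (hρ.measurable_add_one t).mul (h.stronglyAdapted_drift t)
  drift_nonneg t ω := mul_nonneg (hρ_mem_Icc (t + 1) ω).1 (h.drift_nonneg t ω)
  stronglyAdapted_loss t := (hρ.measurable_add_one t).mul (h.stronglyAdapted_loss t)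
  loss_nonneg t ω := mul_nonneg (hρ_mem_Icc (t + 1) ω).1 (h.loss_nonneg t ω)
  condExp_le t := by
    have hint : Integrable (ρ (t + 1) * V (t + 1)) μ :=
      integrable_mul_of_mem_Icc (h.integrable (t + 1))
        ((hρ.stronglyAdapted (t + 1)).mono (ℱ.le (t + 1))).aestronglyMeasurable
        (hρ_mem_Icc (t + 1))
    filter_upwards [condExp_mul_of_stronglyMeasurable_left (hρ.measurable_add_one t) hint
      (h.integrable (t + 1)), h.condExp_le t] with ω hpull hle
    calc (μ[ρ (t + 1) * V (t + 1) | ℱ t]) ω = ρ (t + 1) ω * (μ[V (t + 1) | ℱ t]) ω := hpull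
      _ ≤ ρ (t + 1) ω * ((1 + α t ω) * V t ω + β t ω - γ t ω) :=
          mul_le_mul_of_nonneg_left hle (hρ_mem_Icc (t + 1) ω).1
      _ = ρ (t + 1) ω * (1 + α t ω) * V t ω + ρ (t + 1) ω * β t ω - ρ (t + 1) ω * γ t ω := by ring
      _ ≤ (1 + 0) * (ρ t ω * V t ω) + ρ (t + 1) ω * β t ω - ρ (t + 1) ω * γ t ω := by
          rw [add_zero, one_mul]
          gcongr
          exacts [h.nonneg t ω, hρ_succ t ω]

lemma integrable_loss (h : IsAlmostSupermartingale ℱ μ V 0 β γ) (hβ : ∀ t, Integrable (β t) μ)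
    (t : ℕ) : Integrable (γ t) μ := by
  refine ((h.integrable t).add (hβ t)).mono'
    ((h.stronglyAdapted_loss t).mono (ℱ.le t)).aestronglyMeasurable ?_
  filter_upwards [h.condExp_le t,
    condExp_nonneg (m := ℱ t) (.of_forall (h.nonneg (t + 1)))] with ω hle hnonneg
  rw [Real.norm_of_nonneg (h.loss_nonneg t ω)]
  simp only [Pi.zero_apply, add_zero, one_mul, Pi.add_apply] at hle hnonneg ⊢
  linarith

variable [IsFiniteMeasure μ]

lemma supermartingale_add_sum (h : IsAlmostSupermartingale ℱ μ V 0 β γ)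
    (hβ : ∀ t, Integrable (β t) μ) :
    Supermartingale (fun t ω => V t ω + ∑ s ∈ Finset.range t, (γ s ω - β s ω)) ℱ μ := by
  have hmeas (n t : ℕ) (hnt : n ≤ t + 1) :
      StronglyMeasurable[ℱ t] fun ω => ∑ s ∈ Finset.range n, (γ s ω - β s ω) :=
    Finset.stronglyMeasurable_fun_sum _ fun s hs =>
      have hst : s ≤ t := Nat.le_of_lt_succ ((Finset.mem_range.1 hs).trans_le hnt)
      ((h.stronglyAdapted_loss s).sub (h.stronglyAdapted_drift s)).mono (ℱ.mono hst)
  have hint (n : ℕ) : Integrable (fun ω => ∑ s ∈ Finset.range n, (γ s ω - β s ω)) μ :=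
    integrable_finsetSum _ fun s _ => (h.integrable_loss hβ s).sub (hβ s)
  refine supermartingale_nat (fun t => (h.stronglyAdapted t).add (hmeas t t t.le_succ))
    (fun t => (h.integrable t).add (hint t)) fun t => ?_
  filter_upwards [condExp_add (h.integrable (t + 1)) (hint (t + 1)) (ℱ t), h.condExp_le t]
    with ω hadd hle
  rw [condExp_of_stronglyMeasurable (ℱ.le t) (hmeas (t + 1) t le_rfl) (hint (t + 1))] at hadd
  refine hadd.trans_le ?_
  simp only [Pi.add_apply, Pi.zero_apply, Finset.sum_range_succ] at hle ⊢
  linarith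

lemma ae_exists_tendsto_and_summable_loss_of_sum_drift_le {K : ℝ}
    (h : IsAlmostSupermartingale ℱ μ V 0 β γ)
    (hK : ∀ t ω, ∑ s ∈ Finset.range t, β s ω ≤ K) :
    ∀ᵐ ω ∂μ, (∃ l, Tendsto (fun t => V t ω) atTop (𝓝 l)) ∧ Summable fun t => γ t ω := by
  have hβ_le (t : ℕ) (ω : Ω) : β t ω ≤ K :=
    (Finset.single_le_sum (fun s _ => h.drift_nonneg s ω) (Finset.self_mem_range_succ t)).trans
      (hK (t + 1) ω)
  have hβ_int (t : ℕ) : Integrable (β t) μ :=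
    (memLp_top_of_mem_Icc ((h.stronglyAdapted_drift t).mono (ℱ.le t)).aestronglyMeasurable
      fun ω => ⟨h.drift_nonneg t ω, hβ_le t ω⟩).integrable le_top
  have hγ_sum (t : ℕ) (ω : Ω) : 0 ≤ ∑ s ∈ Finset.range t, γ s ω :=
    Finset.sum_nonneg fun s _ => h.loss_nonneg s ω
  filter_upwards [ae_exists_tendsto_of_supermartingale_of_le (c := -K)
    (h.supermartingale_add_sum hβ_int) fun t ω => by
      rw [Finset.sum_sub_distrib]
      linarith [h.nonneg t ω, hK t ω, hγ_sum t ω]] with ω ⟨l, hl⟩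
  have hβ : Summable fun t => β t ω :=
    summable_of_sum_range_le (fun t => h.drift_nonneg t ω) fun t => hK t ω
  obtain ⟨M, hM⟩ := hl.bddAbove_range
  have hγ : Summable fun t => γ t ω := by
    refine summable_of_sum_range_le (c := M + K) (fun t => h.loss_nonneg t ω) fun t => ?_
    have hMt : V t ω + ∑ s ∈ Finset.range t, (γ s ω - β s ω) ≤ M := hM ⟨t, rfl⟩
    rw [Finset.sum_sub_distrib] at hMt
    linarith [h.nonneg t ω, hK t ω]
  refine ⟨⟨_, (hl.sub (hγ.sub hβ).tendsto_sum_tsum_nat).congr fun t => ?_⟩, hγ⟩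
  exact add_sub_cancel_right _ _

/-- **Robbins–Siegmund theorem**. -/
theorem ae_exists_tendsto_and_summable_loss (h : IsAlmostSupermartingale ℱ μ V α β γ)
    (hα : ∀ᵐ ω ∂μ, Summable fun t => α t ω) (hβ : ∀ᵐ ω ∂μ, Summable fun t => β t ω) :
    ∀ᵐ ω ∂μ, (∃ l, Tendsto (fun t => V t ω) atTop (𝓝 l)) ∧ Summable fun t => γ t ω := by
  have hdiscounted (K : ℕ) := (h.predictable_mul
    (isStronglyPredictable_discountFactor K h.stronglyAdapted_growth h.stronglyAdapted_drift)
    (fun t ω => discountFactor_mem_Icc (h.growth_nonneg · ω) t)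
    (fun t ω => discountFactor_succ_mul_le (h.drift_nonneg · ω) t)
    ).ae_exists_tendsto_and_summable_loss_of_sum_drift_le fun t ω =>
      sum_discountFactor_succ_mul_le K.cast_nonneg (h.growth_nonneg · ω) (h.drift_nonneg · ω) t
  filter_upwards [ae_all_iff.2 hdiscounted, hα, hβ] with ω hω hαω hβω
  obtain ⟨K, hK⟩ := exists_nat_ge (∑' t, β t ω)
  obtain ⟨⟨l, hl⟩, hsummable⟩ := hω K
  have hρ := tendsto_discountFactor hαω fun t =>
    (hβω.sum_le_tsum _ fun s _ => h.drift_nonneg s ω).trans hK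
  have hne : Real.exp (-∑' t, α t ω) ≠ 0 := (Real.exp_pos _).ne'
  refine ⟨⟨_, (hl.div hρ hne).congr' ?_⟩, summable_of_summable_mul_of_tendsto_ne_zero hsummable
    (hρ.comp (tendsto_add_atTop_nat 1)) hne⟩
  filter_upwards [hρ.eventually_ne hne] with t ht using mul_div_cancel_left₀ (V t ω) ht

end IsAlmostSupermartingale

lemma condExp_add_mul_sq {m : MeasurableSpace Ω} [IsFiniteMeasure μ] (hm : m ≤ m₀) {p q W : Ω → ℝ}
    (hp : StronglyMeasurable[m] p) (hq : StronglyMeasurable[m] q) (hp_mem : MemLp p 2 μ)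
    (hW : MemLp W 2 μ) (hqW : MemLp (q * W) 2 μ) (hmean : μ[W | m] =ᵐ[μ] 0) :
    μ[(p + q * W) ^ 2 | m] =ᵐ[μ] p ^ 2 + q ^ 2 * μ[W ^ 2 | m] := by
  have hcondExp : μ[p + q * W | m] =ᵐ[μ] p := by
    filter_upwards [condExp_add (hp_mem.integrable one_le_two) (hqW.integrable one_le_two) m,
      condExp_mul_of_stronglyMeasurable_left hq (hqW.integrable one_le_two)
        (hW.integrable one_le_two), hmean] with ω hadd hmul hzero
    rw [hadd, Pi.add_apply, hmul, Pi.mul_apply, hzero, Pi.zero_apply, mul_zero, add_zero,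
      condExp_of_stronglyMeasurable hm hp (hp_mem.integrable one_le_two)]
  have hcondVar : ProbabilityTheory.condVar m (p + q * W) μ =ᵐ[μ] q ^ 2 * μ[W ^ 2 | m] := by
    have hcentred : (p + q * W - μ[p + q * W | m]) ^ 2 =ᵐ[μ] q ^ 2 * W ^ 2 := by
      filter_upwards [hcondExp] with ω hω
      simp only [Pi.pow_apply, Pi.sub_apply, Pi.add_apply, Pi.mul_apply, hω]
      ring
    refine (condExp_congr_ae hcentred).trans ?_
    refine condExp_mul_of_stronglyMeasurable_left (hq.pow 2) ?_ hW.integrable_sq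
    rw [← mul_pow]
    exact hqW.integrable_sq
  filter_upwards [ProbabilityTheory.condVar_ae_eq_condExp_sq_sub_sq_condExp hm (hp_mem.add hqW),
    hcondVar, hcondExp] with ω hvar hcondVar hcondExp
  rw [hcondVar, Pi.sub_apply, Pi.pow_apply (μ[p + q * W | m]), hcondExp] at hvar
  rw [Pi.add_apply, Pi.pow_apply, hvar]
  ring

/-- The recursion `X_{t+1} = (1 - H_t) X_t + H_t W_t` with `ℱ_t`-measurable step sizes
`H_t ∈ [0, 1]` and conditionally centred noise `W_t`, whose conditional second moment given `ℱ_t`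
is at most `A X_t² + B`. This is the dynamics of the error of a stochastic approximation scheme. -/
structure IsStochasticApproximation (ℱ : Filtration ℕ m₀) (μ : Measure Ω) (X W H : ℕ → Ω → ℝ)
    (A B : ℝ) : Prop where
  stronglyAdapted : StronglyAdapted ℱ X
  stronglyAdapted_step : StronglyAdapted ℱ H
  step_mem_Icc : ∀ t ω, H t ω ∈ Set.Icc (0 : ℝ) 1
  memLp_noise : ∀ t, MemLp (W t) 2 μ
  succ_eq : ∀ t, X (t + 1) = (1 - H t) * X t + H t * W t
  condExp_noise : ∀ t, μ[W t | ℱ t] =ᵐ[μ] 0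
  condExp_noise_sq_le : ∀ t, ∀ᵐ ω ∂μ, (μ[W t ^ 2 | ℱ t]) ω ≤ A * X t ω ^ 2 + B
  nonneg_left : 0 ≤ A
  nonneg_right : 0 ≤ B

namespace IsStochasticApproximation

variable {X W H : ℕ → Ω → ℝ} {A B : ℝ}

lemma memLp_step (h : IsStochasticApproximation ℱ μ X W H A B) (t : ℕ) : MemLp (H t) ⊤ μ :=
  memLp_top_of_mem_Icc ((h.stronglyAdapted_step t).mono (ℱ.le t)).aestronglyMeasurable
    (h.step_mem_Icc t)

lemma memLp_one_sub_step_mul (h : IsStochasticApproximation ℱ μ X W H A B) {t : ℕ}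
    (hX : MemLp (X t) 2 μ) : MemLp ((1 - H t) * X t) 2 μ :=
  hX.mul ((memLp_top_const 1).sub (h.memLp_step t))

lemma memLp (h : IsStochasticApproximation ℱ μ X W H A B) (hX : MemLp (X 0) 2 μ) (t : ℕ) :
    MemLp (X t) 2 μ := by
  induction t with
  | zero => exact hX
  | succ t ih =>
    rw [h.succ_eq]
    exact (h.memLp_one_sub_step_mul ih).add ((h.memLp_noise t).mul (h.memLp_step t))

variable [IsFiniteMeasure μ]

lemma condExp_sq_le (h : IsStochasticApproximation ℱ μ X W H A B) {t : ℕ}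
    (hX : MemLp (X t) 2 μ) :
    ∀ᵐ ω ∂μ, (μ[X (t + 1) ^ 2 | ℱ t]) ω ≤
      (1 + (1 + A) * H t ω ^ 2) * X t ω ^ 2 + B * H t ω ^ 2 - X t ω ^ 2 * (2 * H t ω) := by
  have hsq := condExp_add_mul_sq (ℱ.le t)
    ((stronglyMeasurable_one.sub (h.stronglyAdapted_step t)).mul (h.stronglyAdapted t))
    (h.stronglyAdapted_step t) (h.memLp_one_sub_step_mul hX) (h.memLp_noise t)
    ((h.memLp_noise t).mul (h.memLp_step t)) (h.condExp_noise t)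
  rw [← h.succ_eq t] at hsq
  filter_upwards [hsq, h.condExp_noise_sq_le t] with ω hω hnoise
  calc (μ[X (t + 1) ^ 2 | ℱ t]) ω
      = ((1 - H t ω) * X t ω) ^ 2 + H t ω ^ 2 * (μ[W t ^ 2 | ℱ t]) ω := hω
    _ ≤ ((1 - H t ω) * X t ω) ^ 2 + H t ω ^ 2 * (A * X t ω ^ 2 + B) := by gcongr
    _ = _ := by ring

lemma isAlmostSupermartingale_sq (h : IsStochasticApproximation ℱ μ X W H A B)
    (hX : MemLp (X 0) 2 μ) :
    IsAlmostSupermartingale ℱ μ (fun t => X t ^ 2) (fun t ω => (1 + A) * H t ω ^ 2)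
      (fun t ω => B * H t ω ^ 2) (fun t ω => X t ω ^ 2 * (2 * H t ω)) where
  stronglyAdapted t := (h.stronglyAdapted t).pow 2
  integrable t := (h.memLp hX t).integrable_sq
  nonneg t ω := sq_nonneg (X t ω)
  stronglyAdapted_growth t := ((h.stronglyAdapted_step t).pow 2).const_mul (1 + A)
  growth_nonneg _ _ := mul_nonneg (add_nonneg zero_le_one h.nonneg_left) (sq_nonneg _)
  stronglyAdapted_drift t := ((h.stronglyAdapted_step t).pow 2).const_mul B
  drift_nonneg _ _ := mul_nonneg h.nonneg_right (sq_nonneg _)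
  stronglyAdapted_loss t :=
    ((h.stronglyAdapted t).pow 2).mul ((h.stronglyAdapted_step t).const_mul 2)
  loss_nonneg t ω := mul_nonneg (sq_nonneg _) (mul_nonneg zero_le_two (h.step_mem_Icc t ω).1)
  condExp_le t := h.condExp_sq_le (h.memLp hX t)

lemma ae_tendsto_zero_of_memLp (h : IsStochasticApproximation ℱ μ X W H A B)
    (hX : MemLp (X 0) 2 μ) (hdiv : ∀ᵐ ω ∂μ, ¬ Summable fun t => H t ω)
    (hsq : ∀ᵐ ω ∂μ, Summable fun t => H t ω ^ 2) :
    ∀ᵐ ω ∂μ, Tendsto (fun t => X t ω) atTop (𝓝 0) := by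
  filter_upwards [(h.isAlmostSupermartingale_sq hX).ae_exists_tendsto_and_summable_loss
    (hsq.mono fun ω hω => hω.mul_left (1 + A)) (hsq.mono fun ω hω => hω.mul_left B), hdiv]
    with ω ⟨⟨L, hL⟩, hsummable⟩ hdivω
  have hL_eq : L = 0 := by
    by_contra hne
    exact hdivω ((summable_mul_left_iff two_ne_zero).1
      (summable_of_summable_mul_of_tendsto_ne_zero hsummable hL hne))
  exact tendsto_zero_of_sq_tendsto_zero (hL_eq ▸ hL)

lemma restrict (h : IsStochasticApproximation ℱ μ X W H A B) {s : Set Ω}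
    (hs : MeasurableSet[ℱ 0] s) :
    IsStochasticApproximation ℱ (μ.restrict s) X W H A B where
  stronglyAdapted := h.stronglyAdapted
  stronglyAdapted_step := h.stronglyAdapted_step
  step_mem_Icc := h.step_mem_Icc
  memLp_noise t := (h.memLp_noise t).restrict s
  succ_eq := h.succ_eq
  condExp_noise t := (condExp_restrict_ae_eq_restrict (ℱ.le t) (ℱ.mono t.zero_le s hs)
    ((h.memLp_noise t).integrable one_le_two)).trans (ae_restrict_of_ae (h.condExp_noise t))
  condExp_noise_sq_le t := by
    filter_upwards [condExp_restrict_ae_eq_restrict (ℱ.le t) (ℱ.mono t.zero_le s hs)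
      (h.memLp_noise t).integrable_sq, ae_restrict_of_ae (h.condExp_noise_sq_le t)]
      with ω heq hle using heq.trans_le hle
  nonneg_left := h.nonneg_left
  nonneg_right := h.nonneg_right

theorem ae_tendsto_zero (h : IsStochasticApproximation ℱ μ X W H A B)
    (hdiv : ∀ᵐ ω ∂μ, ¬ Summable fun t => H t ω)
    (hsq : ∀ᵐ ω ∂μ, Summable fun t => H t ω ^ 2) :
    ∀ᵐ ω ∂μ, Tendsto (fun t => X t ω) atTop (𝓝 0) := by
  let E (k : ℕ) : Set Ω := {ω | ‖X 0 ω‖ ≤ k}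
  have hE (k : ℕ) : MeasurableSet[ℱ 0] (E k) :=
    (h.stronglyAdapted 0).norm.measurableSet_le stronglyMeasurable_const
  have hE_univ : ⋃ k, E k = Set.univ :=
    Set.iUnion_eq_univ_iff.2 fun ω => exists_nat_ge ‖X 0 ω‖
  rw [← Measure.restrict_univ (μ := μ), ← hE_univ, ae_restrict_iUnion_iff]
  intro k
  have hX : MemLp (X 0) 2 (μ.restrict (E k)) :=
    .of_bound ((h.stronglyAdapted 0).mono (ℱ.le 0)).aestronglyMeasurable k
      (ae_restrict_mem (ℱ.le 0 _ (hE k)))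
  exact (h.restrict (hE k)).ae_tendsto_zero_of_memLp hX (ae_restrict_of_ae hdiv)
    (ae_restrict_of_ae hsq)

end IsStochasticApproximation

end Probability

lemma mul_sq_add_le_abs_mul_sub_sq_add (A B c x : ℝ) :
    A * x ^ 2 + B ≤ 2 * |A| * (x - c) ^ 2 + (2 * |A| * c ^ 2 + |B|) := by
  have hx : x ^ 2 ≤ 2 * ((x - c) ^ 2 + c ^ 2) := by
    simpa only [sub_add_cancel] using add_sq_le (a := x - c) (b := c)
  calc A * x ^ 2 + B ≤ |A| * (2 * ((x - c) ^ 2 + c ^ 2)) + |B| := by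
        gcongr
        exacts [le_abs_self A, le_abs_self B]
    _ = 2 * |A| * (x - c) ^ 2 + (2 * |A| * c ^ 2 + |B|) := by ring

/-- Stochastic approximation convergence (Lemma 1 of Singh et al. / Lemma 2 of the paper):
if `x_{t+1} = (1 - η_t) x_t + η_t (c + w_t)` with zero-mean noise of conditionally bounded second
moment and step sizes in `[0,1]` that sum to infinity but are square-summable, then
`x_t → c` almost surely. Here `x t`, `η t` and `w (t-1)` are `ℱ (t-1)`-measurable,
expressed by a shift of index. -/
theorem stochastic_approximation_to_const
    {Ω : Type*} {m : MeasurableSpace Ω} {P : Measure Ω} [IsProbabilityMeasure P]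
    (ℱ : Filtration ℕ m) (x w η : ℕ → Ω → ℝ) (c : ℝ)
    -- x_t, η_t and w_{t-1} are ℱ_{t-1}-measurable:
    (hx_meas : ∀ t : ℕ, StronglyMeasurable[ℱ t] (x (t + 1)))
    (hη_meas : ∀ t : ℕ, StronglyMeasurable[ℱ t] (η (t + 1)))
    (hw_meas : ∀ t : ℕ, StronglyMeasurable[ℱ t] (w t))
    -- integrability, needed so the conditional expectations are meaningful:
    (hw_int : ∀ t : ℕ, Integrable (w t) P)
    (hw_sq_int : ∀ t : ℕ, Integrable (fun ω => (w t ω) ^ 2) P)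
    -- the recursion:
    (hrec : ∀ t : ℕ, ∀ ω, x (t + 1) ω = (1 - η t ω) * x t ω + η t ω * (c + w t ω))
    -- (1) conditionally bounded second moments:
    (A B : ℝ)
    (hmoment : ∀ t : ℕ,
      ∀ᵐ ω ∂P, (P[(fun ω => (w (t + 1) ω) ^ 2) | ℱ t]) ω ≤ A * |x (t + 1) ω| ^ 2 + B)
    -- (2) zero conditional mean:
    (hmean : ∀ t : ℕ, ∀ᵐ ω ∂P, (P[w (t + 1) | ℱ t]) ω = 0)
    -- (3) step sizes in [0,1]:
    (hη01 : ∀ t : ℕ, ∀ ω, η t ω ∈ Set.Icc (0 : ℝ) 1)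
    -- (4) ∑ η_t = ∞ a.s.:
    (hη_div : ∀ᵐ ω ∂P, ¬ Summable (fun t => η t ω))
    -- (5) ∑ η_t² < ∞ a.s.:
    (hη_sq : ∀ᵐ ω ∂P, Summable (fun t => (η t ω) ^ 2)) :
    ∀ᵐ ω ∂P, Tendsto (fun t => x t ω) atTop (𝓝 c) := by
  have herror : IsStochasticApproximation ℱ P (fun t ω => x (t + 1) ω - c) (fun t => w (t + 1))
      (fun t => η (t + 1)) (2 * |A|) (2 * |A| * c ^ 2 + |B|) :=
    { stronglyAdapted := fun t => (hx_meas t).sub stronglyMeasurable_const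
      stronglyAdapted_step := hη_meas
      step_mem_Icc := fun t => hη01 (t + 1)
      memLp_noise := fun t =>
        (memLp_two_iff_integrable_sq (hw_int (t + 1)).aestronglyMeasurable).2 (hw_sq_int (t + 1))
      succ_eq := fun t => funext fun ω => by
        simp only [hrec (t + 1) ω, Pi.add_apply, Pi.mul_apply, Pi.sub_apply, Pi.one_apply]
        ring
      condExp_noise := hmean
      condExp_noise_sq_le := fun t => (hmoment t).mono fun ω hω => by
        rw [sq_abs] at hω
        exact hω.trans (mul_sq_add_le_abs_mul_sub_sq_add A B c (x (t + 1) ω))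
      nonneg_left := by positivity
      nonneg_right := by positivity }
  have hdiv : ∀ᵐ ω ∂P, ¬ Summable fun t => η (t + 1) ω :=
    hη_div.mono fun ω hω h => hω ((summable_nat_add_iff (f := (η · ω)) 1).1 h)
  have hsq : ∀ᵐ ω ∂P, Summable fun t => η (t + 1) ω ^ 2 :=
    hη_sq.mono fun ω hω => (summable_nat_add_iff (f := (η · ω ^ 2)) 1).2 hω
  filter_upwards [herror.ae_tendsto_zero hdiv hsq] with ω hω
  exact (tendsto_add_atTop_iff_nat (f := (x · ω)) 1).1 (tendsto_sub_nhds_zero_iff.1 hω)
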